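/- Let p be an odd prime, q = p^r, let t < r, and choose an integer d with 1 ≤ d ≤ p^{r−t} and gcd(d,p) = 1. Set n = d·p^t. Then for every integer m with 2 ≤ m ≤ p^t/2 there exists an [n, n−2m] LCD MDS code over F_q. -/

import Mathlib

/-!
A Reed–Solomon code of dimension `k` and length `n ≤ q` is MDS, and so is every code obtained from
it by multiplying the coordinates by nonzero scalars `a i`. Such a rescaled code is LCD exactly when
the weighted form `∑ i, (a i)² f(α i) g(α i)` is nondegenerate on polynomials of degree `< k`, so it
suffices to find nonzero squares `w i` for which the form with weights `w` is nondegenerate.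

With weight `1` on `k` coordinates and `0` elsewhere the form is nondegenerate, by Lagrange
interpolation (`exists_nondegWeight`). Starting from a nondegenerate form, changing a single weight
can destroy nondegeneracy for at most one new value (`NondegWeight.update_or`), as the Gram
determinant is affine in each weight. For `q > 3` there are two distinct nonzero squares `1` and
`b²`, so the weights can be replaced one at a time by elements of `{1, b²}`
(`NondegWeight.exists_of_two_values`). Hence LCD MDS codes exist for all `k ≤ n ≤ q` when `q > 3`
(`exists_lcdmds`); in the theorem `q = p ^ r ≥ p ^ t > 3`.
-/

/-- `C` is an `[n, k]` LCD MDS code over the field `F`: it is a `k`-dimensional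
linear subspace of `F^n`, it intersects its Euclidean dual trivially, and every
nonzero codeword has Hamming weight at least `n - k + 1`. -/
def IsLCDMDSCode {F : Type} [Field F] [DecidableEq F] {n : ℕ} (k : ℕ)
    (C : Submodule F (Fin n → F)) : Prop :=
  Module.finrank F C = k ∧
  (∀ x ∈ C, (∀ c ∈ C, ∑ i, x i * c i = 0) → x = 0) ∧
  (∀ x ∈ C, x ≠ 0 → n - k + 1 ≤ (Finset.univ.filter fun i => x i ≠ 0).card)

open Polynomial

/-- The symmetric bilinear form `(x, y) ↦ ∑ i, w i * φ x i * φ y i` on `V` is nondegenerate. -/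
def NondegWeight {F V ι : Type*} [Field F] [AddCommGroup V] [Module F V] [Fintype ι]
    (φ : V →ₗ[F] (ι → F)) (w : ι → F) : Prop :=
  ∀ x, (∀ y, ∑ i, w i * φ x i * φ y i = 0) → x = 0

section Weights

variable {F V ι : Type*} [Field F] [AddCommGroup V] [Module F V] [Fintype ι] [DecidableEq ι]

lemma sum_update_weight (φ : V →ₗ[F] (ι → F)) (w : ι → F) (j : ι) (c : F) (x y : V) :
    ∑ i, Function.update w j c i * φ x i * φ y i
      = ∑ i, w i * φ x i * φ y i + (c - w j) * φ x j * φ y j := by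
  rw [← Finset.add_sum_erase _ _ (Finset.mem_univ j),
    ← Finset.add_sum_erase _ (fun i => w i * φ x i * φ y i) (Finset.mem_univ j)]
  have h : ∑ i ∈ Finset.univ.erase j, Function.update w j c i * φ x i * φ y i
      = ∑ i ∈ Finset.univ.erase j, w i * φ x i * φ y i := by
    refine Finset.sum_congr rfl fun i hi => ?_
    rw [Function.update_of_ne (Finset.ne_of_mem_erase hi)]
  rw [h, Function.update_self]
  ring

/-- If the form becomes degenerate when the `j`-th weight is set to `c`, a suitably scaled kernel
vector `x` represents the `j`-th coordinate functional for the original form. -/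
lemma NondegWeight.exists_of_not_update {φ : V →ₗ[F] (ι → F)} {w : ι → F}
    (hw : NondegWeight φ w) (j : ι) (c : F) (h : ¬ NondegWeight φ (Function.update w j c)) :
    ∃ x, (c - w j) * φ x j = -1 ∧ ∀ y, ∑ i, w i * φ x i * φ y i = φ y j := by
  unfold NondegWeight at h
  push Not at h
  obtain ⟨x, hx, hx0⟩ := h
  simp only [sum_update_weight] at hx
  have hne : (c - w j) * φ x j ≠ 0 := by
    intro h0
    exact hx0 (hw x fun y => by simpa [h0] using hx y)
  refine ⟨(-((c - w j) * φ x j)⁻¹) • x, ?_, fun y => ?_⟩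
  · simp only [map_smul, Pi.smul_apply, smul_eq_mul]
    linear_combination -(mul_inv_cancel₀ hne)
  · have e : ∑ i, w i * φ ((-((c - w j) * φ x j)⁻¹) • x) i * φ y i
        = (-((c - w j) * φ x j)⁻¹) * ∑ i, w i * φ x i * φ y i := by
      rw [Finset.mul_sum]
      refine Finset.sum_congr rfl fun i _ => ?_
      simp only [map_smul, Pi.smul_apply, smul_eq_mul]
      ring
    rw [e]
    linear_combination (-((c - w j) * φ x j)⁻¹) * hx y + φ y j * mul_inv_cancel₀ hne

/-- At most one value of the `j`-th weight makes the form degenerate. -/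
lemma NondegWeight.update_or {φ : V →ₗ[F] (ι → F)} {w : ι → F}
    (hw : NondegWeight φ w) (j : ι) {c₁ c₂ : F} (hc : c₁ ≠ c₂) :
    NondegWeight φ (Function.update w j c₁) ∨ NondegWeight φ (Function.update w j c₂) := by
  by_contra! h
  obtain ⟨x₁, h₁, e₁⟩ := hw.exists_of_not_update j c₁ h.1
  obtain ⟨x₂, h₂, e₂⟩ := hw.exists_of_not_update j c₂ h.2
  -- Both vectors represent the same functional, so they agree.
  have hx : x₁ - x₂ = 0 := hw _ fun y => by
    rw [← sub_self (φ y j)]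
    nth_rewrite 1 [← e₁ y]
    rw [← e₂ y, ← Finset.sum_sub_distrib]
    refine Finset.sum_congr rfl fun i _ => ?_
    simp only [map_sub, Pi.sub_apply]
    ring
  obtain rfl := sub_eq_zero.mp hx
  have hne : φ x₁ j ≠ 0 := by
    intro h0
    simp [h0] at h₁
  have := mul_right_cancel₀ hne (h₁.trans h₂.symm)
  exact hc (sub_left_inj.mp this)

lemma NondegWeight.exists_of_two_values {φ : V →ₗ[F] (ι → F)} {w : ι → F}
    (hw : NondegWeight φ w) {c₁ c₂ : F} (hc : c₁ ≠ c₂) :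
    ∃ w' : ι → F, (∀ i, w' i = c₁ ∨ w' i = c₂) ∧ NondegWeight φ w' := by
  suffices H : ∀ s : Finset ι, ∃ w' : ι → F, (∀ i ∈ s, w' i = c₁ ∨ w' i = c₂) ∧
      NondegWeight φ w' by
    obtain ⟨w', h, h'⟩ := H Finset.univ
    exact ⟨w', fun i => h i (Finset.mem_univ i), h'⟩
  intro s
  induction s using Finset.induction_on with
  | empty => exact ⟨w, by simp, hw⟩
  | insert j s hj ih =>
    obtain ⟨w', h, h'⟩ := ih
    have key : ∀ c, (c = c₁ ∨ c = c₂) → ∀ i ∈ insert j s,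
        Function.update w' j c i = c₁ ∨ Function.update w' j c i = c₂ := by
      intro c hc i hi
      by_cases hij : i = j
      · subst hij
        simpa using hc
      · rw [Function.update_of_ne hij]
        exact h i (Finset.mem_of_mem_insert_of_ne hi hij)
    rcases h'.update_or j hc with h₁ | h₁
    · exact ⟨_, key c₁ (Or.inl rfl), h₁⟩
    · exact ⟨_, key c₂ (Or.inr rfl), h₁⟩

end Weights

section ReedSolomon

variable {F ι : Type*} [Field F]

/-- Evaluation of polynomials of degree `< k` at the points `α i`, the `i`-th value being multiplied
by `a i`; the range is a generalized Reed–Solomon code. -/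
noncomputable def grsMap (k : ℕ) (α a : ι → F) : degreeLT F k →ₗ[F] (ι → F) where
  toFun f i := a i * (f : F[X]).eval (α i)
  map_add' f g := by ext i; simp [mul_add]
  map_smul' c f := by ext i; simp [mul_left_comm]

@[simp] lemma grsMap_apply (k : ℕ) (α a : ι → F) (f : degreeLT F k) (i : ι) :
    grsMap k α a f i = a i * (f : F[X]).eval (α i) := rfl

/-- The indicator weight of any `k` coordinates is nondegenerate, as a polynomial of degree `< k`
takes arbitrary values at `k` distinct points and is determined by them. -/
lemma exists_nondegWeight [Fintype ι] [DecidableEq ι] (k : ℕ) (α : ι → F)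
    (hα : Function.Injective α) (hk : k ≤ Fintype.card ι) :
    ∃ w, NondegWeight (grsMap k α 1) w := by
  obtain ⟨s, -, hs⟩ := Finset.exists_subset_card_eq (s := (Finset.univ : Finset ι))
    (n := k) (by simpa using hk)
  refine ⟨fun i => if i ∈ s then 1 else 0, fun f hf => ?_⟩
  have hzero : ∀ j ∈ s, (f : F[X]).eval (α j) = 0 := by
    intro j hj
    have hg : Lagrange.interpolate s α (Pi.single j 1) ∈ degreeLT F k := by
      rw [mem_degreeLT, ← hs]
      exact Lagrange.degree_interpolate_lt _ hα.injOn
    have hval : ∀ i ∈ s, (Lagrange.interpolate s α (Pi.single j 1)).eval (α i)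
        = (Pi.single j 1 : ι → F) i :=
      fun i hi => Lagrange.eval_interpolate_at_node _ hα.injOn hi
    have h := hf ⟨_, hg⟩
    simp only [grsMap_apply] at h
    rw [Finset.sum_eq_single j] at h
    · rw [hval j hj] at h
      simpa [hj] using h
    · intro i _ hij
      by_cases hi : i ∈ s
      · rw [hval i hi]
        simp [hij]
      · simp [hi]
    · simp
  apply Subtype.ext
  refine Polynomial.eq_zero_of_degree_lt_of_eval_index_eq_zero s hα.injOn ?_ hzero
  rw [hs]
  exact mem_degreeLT.mp f.2

/-- A nonzero polynomial of degree `< k` has fewer than `k` zeros among the points `α i`. -/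
lemma grsMap_zeros_card_lt [Fintype ι] [DecidableEq F] {k : ℕ} {α a : ι → F}
    (hα : Function.Injective α) (ha : ∀ i, a i ≠ 0) {f : degreeLT F k} (hf : f ≠ 0) :
    (Finset.univ.filter fun i => grsMap k α a f i = 0).card < k := by
  by_contra! h
  refine hf (Subtype.ext ?_)
  refine Polynomial.eq_zero_of_degree_lt_of_eval_index_eq_zero
    (Finset.univ.filter fun i => grsMap k α a f i = 0) hα.injOn ?_ ?_
  · exact (mem_degreeLT.mp f.2).trans_le (by exact_mod_cast h)
  · intro i hi
    simpa [ha i] using hi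

end ReedSolomon

theorem exists_lcdmds {F : Type} [Field F] [Fintype F] [DecidableEq F]
    (hF : 3 < Fintype.card F) {n k : ℕ} (hn : n ≤ Fintype.card F) (hk : k ≤ n) :
    ∃ C : Submodule F (Fin n → F), IsLCDMDSCode k C := by
  obtain ⟨α⟩ : Nonempty (Fin n ↪ F) :=
    Function.Embedding.nonempty_of_card_le (by simpa using hn)
  -- Outside `{0, 1, -1}` there is a `b` whose square is neither `0` nor `1`.
  obtain ⟨b, hb⟩ : ∃ b, b ∉ ({0, 1, -1} : Finset F) := by
    by_contra! h
    have h1 : (Finset.univ : Finset F).card ≤ ({0, 1, -1} : Finset F).card :=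
      Finset.card_le_card fun x _ => h x
    have h2 := Finset.card_le_three (a := (0 : F)) (b := 1) (c := -1)
    rw [Finset.card_univ] at h1
    omega
  simp only [Finset.mem_insert, Finset.mem_singleton, not_or] at hb
  obtain ⟨hb0, hb1, hb2⟩ := hb
  have hbb : (1 : F) ≠ b ^ 2 := fun h => (sq_eq_sq_iff_eq_or_eq_neg.mp (h.symm.trans (one_pow 2).symm)).elim hb1 hb2
  obtain ⟨w₀, hw₀⟩ := exists_nondegWeight k α α.injective (by simpa using hk)
  obtain ⟨w, hw, hnd⟩ := hw₀.exists_of_two_values hbb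
  have hsqrt : ∀ i, ∃ a : F, a ≠ 0 ∧ a ^ 2 = w i := by
    intro i
    rcases hw i with h | h
    · exact ⟨1, one_ne_zero, by simp [h]⟩
    · exact ⟨b, hb0, h.symm⟩
  choose a ha0 ha using hsqrt
  have hsplit : ∀ f : degreeLT F k,
      (Finset.univ.filter fun i => grsMap k α a f i = 0).card
        + (Finset.univ.filter fun i => grsMap k α a f i ≠ 0).card = n := by
    intro f
    simpa using Finset.card_filter_add_card_filter_not (s := (Finset.univ : Finset (Fin n)))
      (fun i => grsMap k α a f i = 0)
  refine ⟨LinearMap.range (grsMap k α a), ?_, ?_, ?_⟩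
  · have hinj : Function.Injective (grsMap k α a) := by
      rw [injective_iff_map_eq_zero]
      intro f hf
      by_contra hf0
      have := grsMap_zeros_card_lt α.injective ha0 hf0
      simp only [hf, Pi.zero_apply, Finset.filter_true, Finset.card_univ, Fintype.card_fin] at this
      omega
    rw [LinearMap.finrank_range_of_inj hinj, (degreeLTEquiv F k).finrank_eq]
    simp
  · rintro _ ⟨f, rfl⟩ h
    have : f = 0 := hnd f fun g => by
      rw [← h _ ⟨g, rfl⟩]
      refine Finset.sum_congr rfl fun i _ => ?_
      simp only [grsMap_apply, Pi.one_apply, ← ha]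
      ring
    simp [this]
  · rintro _ ⟨f, rfl⟩ h
    have hf : f ≠ 0 := by
      rintro rfl
      simp at h
    have h1 := grsMap_zeros_card_lt α.injective ha0 hf
    have h2 := hsplit f
    omega

theorem stmt6 (p r t d : ℕ) (hp : p.Prime) (hpodd : Odd p) (htr : t < r)
    (F : Type) [Field F] [Fintype F] [DecidableEq F]
    (hcard : Fintype.card F = p ^ r)
    (hd1 : 1 ≤ d) (hd2 : d ≤ p ^ (r - t)) (hgcd : Nat.gcd d p = 1)
    (m : ℕ) (hm2 : 2 ≤ m) (hm : 2 * m ≤ p ^ t) :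
    ∃ C : Submodule F (Fin (d * p ^ t) → F), IsLCDMDSCode (d * p ^ t - 2 * m) C := by
  have hle : p ^ t ≤ p ^ r := Nat.pow_le_pow_right hp.pos htr.le
  refine exists_lcdmds (by omega) ?_ (Nat.sub_le _ _)
  rw [hcard, ← Nat.sub_add_cancel htr.le, pow_add]
  exact Nat.mul_le_mul_right _ hd2
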